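/- Let H be a graph on [k], let ⋆ ∈ {ind, sub}, and let f_H^* be the optimal value of the corresponding optimization problem. Fix ε̄ > 0 and let E_ε̄ be the event that max_{v ∈ [n]} w_v < n^{1/(τ−1)}/ε̄ and min_{u≠v} ‖x_u − x_v‖ > ε̄ n^{−1/d}. Then for every δ > 0, limsup_{n→∞} E[ N^⋆(H) | E_ε̄ ] / n^{f_H^* + δ} < ∞. -/

import Mathlib

open MeasureTheory Filter Finset

noncomputable section

instance : Fact ((0:ℝ) < 1) := ⟨one_pos⟩

/-- The `d`-dimensional torus `ℝ^d/ℤ^d`, with the sup of coordinatewise circle distances. -/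
abbrev Torus (d : ℕ) := Fin d → AddCircle (1 : ℝ)

/-- Sample space of the GIRG on `n` vertices: weights, positions, and iid uniform
`[0,1]` coins deciding the presence of each potential edge. -/
abbrev GirgΩ (d n : ℕ) := (Fin n → ℝ) × (Fin n → Torus d) × (Sym2 (Fin n) → ℝ)

/-- The law of the randomness of the GIRG: iid weights with law `μW`, iid uniform positions
on the torus, iid uniform coins. -/
def girgMeasure (μW : Measure ℝ) (d n : ℕ) : Measure (GirgΩ d n) :=
  (Measure.pi fun _ : Fin n => μW).prod
    ((Measure.pi fun _ : Fin n => (volume : Measure (Torus d))).prod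
      (Measure.pi fun _ : Sym2 (Fin n) => volume.restrict (Set.Icc (0:ℝ) 1)))

/-- mean `μ = E[W]` of the weight distribution -/
def wMean (μW : Measure ℝ) : ℝ := ∫ x, x ∂μW

/-- Power-law tail assumption: `W ≥ 1` a.s. and `P(W > x) = c x^{1-τ} (1+o(1))` as `x → ∞`. -/
def WeightTail (τ c : ℝ) (μW : Measure ℝ) : Prop :=
  0 < c ∧ μW (Set.Iio 1) = 0 ∧
    Tendsto (fun x : ℝ => (μW (Set.Ioi x)).toReal / (c * x ^ (1 - τ))) atTop (nhds 1)

/-- GIRG connection probability `min(1, (w_u w_v / (n μ ‖x_u - x_v‖^d))^γ)`. -/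
def connProb (γ μbar : ℝ) (d n : ℕ) (w : Fin n → ℝ) (x : Fin n → Torus d)
    (u v : Fin n) : ℝ :=
  min 1 ((w u * w v / ((n : ℝ) * μbar * dist (x u) (x v) ^ d)) ^ γ)

/-- `u` and `v` are joined by an edge of the GIRG in outcome `ω`. -/
def girgEdge (γ μbar : ℝ) (d n : ℕ) (ω : GirgΩ d n) (u v : Fin n) : Prop :=
  u ≠ v ∧ ω.2.2 s(u, v) ≤ connProb γ μbar d n ω.1 ω.2.1 u v

/-- the window `[ε t, t/ε]` -/
def windowIcc (ε t : ℝ) : Set ℝ := Set.Icc (ε * t) (t / ε)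

/-- The set `M_ε^{(α,β)}` of ordered `k`-tuples of distinct vertices with prescribed
weights and inter-distances. -/
def Mset {k : ℕ} (ε : ℝ) (α : Fin k → ℝ) (β : Fin k → Fin k → ℝ) (d n : ℕ)
    (w : Fin n → ℝ) (x : Fin n → Torus d) : Set (Fin k → Fin n) :=
  {v | Function.Injective v ∧
    (∀ i, w (v i) ∈ windowIcc ε ((n : ℝ) ^ (α i))) ∧
    (∀ i j : Fin k, i < j → dist (x (v i)) (x (v j)) ∈ windowIcc ε ((n : ℝ) ^ (β i j)))}

/-- `N^{sub}(H; M_ε^{(α,β)})` -/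
def nSubM {k : ℕ} (H : SimpleGraph (Fin k)) (γ μbar ε : ℝ) (α : Fin k → ℝ)
    (β : Fin k → Fin k → ℝ) (d n : ℕ) (ω : GirgΩ d n) : ℕ :=
  Set.ncard {v : Fin k → Fin n | v ∈ Mset ε α β d n ω.1 ω.2.1 ∧
    ∀ i j : Fin k, H.Adj i j → girgEdge γ μbar d n ω (v i) (v j)}

/-- `N^{ind}(H; M_ε^{(α,β)})` -/
def nIndM {k : ℕ} (H : SimpleGraph (Fin k)) (γ μbar ε : ℝ) (α : Fin k → ℝ)
    (β : Fin k → Fin k → ℝ) (d n : ℕ) (ω : GirgΩ d n) : ℕ :=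
  Set.ncard {v : Fin k → Fin n | v ∈ Mset ε α β d n ω.1 ω.2.1 ∧
    ∀ i j : Fin k, i ≠ j → (H.Adj i j ↔ girgEdge γ μbar d n ω (v i) (v j))}

/-- `N^{sub}(H)` -/
def nSubTotal {k : ℕ} (H : SimpleGraph (Fin k)) (γ μbar : ℝ) (d n : ℕ)
    (ω : GirgΩ d n) : ℕ :=
  Set.ncard {v : Fin k → Fin n | Function.Injective v ∧
    ∀ i j : Fin k, H.Adj i j → girgEdge γ μbar d n ω (v i) (v j)}

/-- `N^{ind}(H)` -/
def nIndTotal {k : ℕ} (H : SimpleGraph (Fin k)) (γ μbar : ℝ) (d n : ℕ)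
    (ω : GirgΩ d n) : ℕ :=
  Set.ncard {v : Fin k → Fin n | Function.Injective v ∧
    ∀ i j : Fin k, i ≠ j → (H.Adj i j ↔ girgEdge γ μbar d n ω (v i) (v j))}

/-- `β` read as a symmetric matrix (only entries with `i < j` are meaningful). -/
def bsym {k : ℕ} (β : Fin k → Fin k → ℝ) (i j : Fin k) : ℝ := if i < j then β i j else β j i

/-- The feasible region `F`. -/
def Feasible (τ : ℝ) (d : ℕ) {k : ℕ} (α : Fin k → ℝ) (β : Fin k → Fin k → ℝ) : Prop :=
  (∀ i, α i ∈ Set.Icc (0 : ℝ) (1 / (τ - 1))) ∧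
  (∀ i j : Fin k, i < j → β i j ∈ Set.Icc (-(1 / (d : ℝ))) 0) ∧
  (∀ i j s : Fin k, i < j → s ≠ i → s ≠ j → β i j ≤ max (bsym β i s) (bsym β j s))

/-- `min_{i<j} β_{ij}` (with value `0 = sInf ∅` for the first vertex `j`,
which does not contribute). -/
def minBeta {k : ℕ} (β : Fin k → Fin k → ℝ) (j : Fin k) : ℝ :=
  sInf {x : ℝ | ∃ i, i < j ∧ x = β i j}

open scoped Classical in
/-- The exponent `f_H(α,β)`. -/
def fExp (τ γ : ℝ) (d : ℕ) {k : ℕ} (H : SimpleGraph (Fin k))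
    (α : Fin k → ℝ) (β : Fin k → Fin k → ℝ) : ℝ :=
  (k : ℝ) + (1 - τ) * ∑ i, α i + (d : ℝ) * ∑ j, minBeta β j +
    γ * ∑ p ∈ Finset.univ.filter (fun p : Fin k × Fin k => p.1 < p.2 ∧ H.Adj p.1 p.2),
        min (α p.1 + α p.2 - (d : ℝ) * β p.1 p.2 - 1) 0

/-- Extra constraints for the induced optimization problem:
`α_i + α_j ≤ 1 + d β_{ij}` for all non-edges. -/
def IndConstr (d : ℕ) {k : ℕ} (H : SimpleGraph (Fin k)) (α : Fin k → ℝ)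
    (β : Fin k → Fin k → ℝ) : Prop :=
  ∀ i j : Fin k, i < j → ¬H.Adj i j → α i + α j ≤ 1 + (d : ℝ) * β i j

/-- `(α,β)` is an optimal solution of the general optimization problem. -/
def IsOptimalSub (τ γ : ℝ) (d : ℕ) {k : ℕ} (H : SimpleGraph (Fin k))
    (α : Fin k → ℝ) (β : Fin k → Fin k → ℝ) : Prop :=
  Feasible τ d α β ∧
    ∀ α' β', Feasible τ d α' β' → fExp τ γ d H α' β' ≤ fExp τ γ d H α β

/-- `(α,β)` is an optimal solution of the induced optimization problem. -/
def IsOptimalInd (τ γ : ℝ) (d : ℕ) {k : ℕ} (H : SimpleGraph (Fin k))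
    (α : Fin k → ℝ) (β : Fin k → Fin k → ℝ) : Prop :=
  Feasible τ d α β ∧ IndConstr d H α β ∧
    ∀ α' β', Feasible τ d α' β' → IndConstr d H α' β' →
      fExp τ γ d H α' β' ≤ fExp τ γ d H α β

/-- the two kinds of subgraph counts -/
inductive StarKind | ind | sub

/-- `N^⋆(H; M_ε^{(α,β)})` -/
def starNM (s : StarKind) {k : ℕ} (H : SimpleGraph (Fin k)) (γ μbar ε : ℝ) (α : Fin k → ℝ)
    (β : Fin k → Fin k → ℝ) (d n : ℕ) (ω : GirgΩ d n) : ℕ :=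
  match s with
  | .sub => nSubM H γ μbar ε α β d n ω
  | .ind => nIndM H γ μbar ε α β d n ω

/-- `N^⋆(H)` -/
def starNTotal (s : StarKind) {k : ℕ} (H : SimpleGraph (Fin k)) (γ μbar : ℝ) (d n : ℕ)
    (ω : GirgΩ d n) : ℕ :=
  match s with
  | .sub => nSubTotal H γ μbar d n ω
  | .ind => nIndTotal H γ μbar d n ω

/-- optimality in the optimization problem corresponding to `⋆` -/
def starIsOptimal (s : StarKind) (τ γ : ℝ) (d : ℕ) {k : ℕ} (H : SimpleGraph (Fin k))
    (α : Fin k → ℝ) (β : Fin k → Fin k → ℝ) : Prop :=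
  match s with
  | .sub => IsOptimalSub τ γ d H α β
  | .ind => IsOptimalInd τ γ d H α β

/-- the optimal value `f_H^*` of the optimization problem corresponding to `⋆` -/
def starOptVal (s : StarKind) (τ γ : ℝ) (d : ℕ) {k : ℕ} (H : SimpleGraph (Fin k)) : ℝ :=
  match s with
  | .sub => sSup {x | ∃ α β, Feasible τ d α β ∧ x = fExp τ γ d H α β}
  | .ind => sSup {x | ∃ α β, Feasible τ d α β ∧ IndConstr d H α β ∧ x = fExp τ γ d H α β}

/-- `(α,β)` is the unique optimal solution (in the `α`-variables and the
`β`-variables with `i < j`). -/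
def UniquelyOptimal (s : StarKind) (τ γ : ℝ) (d : ℕ) {k : ℕ} (H : SimpleGraph (Fin k))
    (α : Fin k → ℝ) (β : Fin k → Fin k → ℝ) : Prop :=
  starIsOptimal s τ γ d H α β ∧
    ∀ α' β', starIsOptimal s τ γ d H α' β' →
      α' = α ∧ ∀ i j : Fin k, i < j → β' i j = β i j


/-- the cutoff event `E_ε̄` on weights and inter-distances -/
def cutoffEvent (τ εbar : ℝ) (d n : ℕ) : Set (GirgΩ d n) :=
  {ω | (∀ v, ω.1 v < (n : ℝ) ^ (1 / (τ - 1)) / εbar) ∧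
    ∀ u v : Fin n, u ≠ v → εbar * (n : ℝ) ^ (-(1 / (d : ℝ))) < dist (ω.2.1 u) (ω.2.1 v)}


/-- threshold graph -/
def thrG {k : ℕ} {Y : Type*} [PseudoMetricSpace Y] (y : Fin k → Y) (t : ℝ) : SimpleGraph (Fin k) where
  Adj a b := a ≠ b ∧ dist (y a) (y b) ≤ t
  symm := ⟨fun a b h => ⟨h.1.symm, by rw [dist_comm]; exact h.2⟩⟩
  loopless := ⟨fun a h => h.1 rfl⟩

lemma thrG_walk {k : ℕ} {Y : Type*} [PseudoMetricSpace Y] (y : Fin k → Y) (t : ℝ) (i j : Fin k)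
    (p : (thrG y t).Walk i j) : dist (y i) (y j) ≤ p.length * t := by
  induction p with
  | nil => simp
  | @cons u v w h p ih =>
    have h2 : dist (y u) (y v) ≤ t := h.2
    have := dist_triangle (y u) (y v) (y w)
    simp only [SimpleGraph.Walk.length_cons]
    push_cast
    linarith

/-- single linkage ultrametric -/
def ultra {k : ℕ} {Y : Type*} [PseudoMetricSpace Y] (y : Fin k → Y) (i j : Fin k) : ℝ :=
  sInf {t : ℝ | 0 ≤ t ∧ (thrG y t).Reachable i j}

lemma ultra_bdd {k : ℕ} {Y : Type*} [PseudoMetricSpace Y] (y : Fin k → Y) (i j : Fin k) :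
    BddBelow {t : ℝ | 0 ≤ t ∧ (thrG y t).Reachable i j} := ⟨0, fun _ h => h.1⟩

lemma ultra_mem {k : ℕ} {Y : Type*} [PseudoMetricSpace Y] (y : Fin k → Y) (i j : Fin k)
    (hij : i ≠ j) :
    dist (y i) (y j) ∈ {t : ℝ | 0 ≤ t ∧ (thrG y t).Reachable i j} := by
  refine ⟨dist_nonneg, SimpleGraph.Adj.reachable ?_⟩
  exact ⟨hij, le_rfl⟩

lemma ultra_le {k : ℕ} {Y : Type*} [PseudoMetricSpace Y] (y : Fin k → Y) (i j : Fin k)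
    (hij : i ≠ j) : ultra y i j ≤ dist (y i) (y j) :=
  csInf_le (ultra_bdd y i j) (ultra_mem y i j hij)

lemma thrG_mono {k : ℕ} {Y : Type*} [PseudoMetricSpace Y] (y : Fin k → Y) {s t : ℝ} (h : s ≤ t) :
    thrG y s ≤ thrG y t := fun _ _ hab => ⟨hab.1, hab.2.trans h⟩

lemma ultra_reach {k : ℕ} {Y : Type*} [PseudoMetricSpace Y] (y : Fin k → Y) (i j : Fin k)
    (hij : i ≠ j) {t : ℝ} (ht : ultra y i j < t) : 0 ≤ t ∧ (thrG y t).Reachable i j := by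
  obtain ⟨s, hs, hst⟩ := (csInf_lt_iff (ultra_bdd y i j) ⟨_, ultra_mem y i j hij⟩).1 ht
  exact ⟨hs.1.trans hst.le, hs.2.mono (thrG_mono y hst.le)⟩

lemma ultra_symm {k : ℕ} {Y : Type*} [PseudoMetricSpace Y] (y : Fin k → Y) (i j : Fin k) :
    ultra y i j = ultra y j i := by
  unfold ultra
  congr 1
  ext t
  simp only [Set.mem_ofPred_eq]
  exact and_congr_right fun _ => ⟨fun h => h.symm, fun h => h.symm⟩

lemma ultra_tri {k : ℕ} {Y : Type*} [PseudoMetricSpace Y] (y : Fin k → Y) (i j s : Fin k)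
    (hsi : s ≠ i) (hsj : s ≠ j) : ultra y i j ≤ max (ultra y i s) (ultra y j s) := by
  refine le_of_forall_gt fun t ht => ?_
  obtain ⟨t', h1, h2⟩ := exists_between ht
  rw [max_lt_iff] at h1
  have a := ultra_reach y i s hsi.symm h1.1
  have b := ultra_reach y j s hsj.symm h1.2
  exact lt_of_le_of_lt (csInf_le (ultra_bdd y i j) ⟨a.1, a.2.trans b.2.symm⟩) h2

lemma le_ultra {k : ℕ} {Y : Type*} [PseudoMetricSpace Y] (y : Fin k → Y) (i j : Fin k)
    (hij : i ≠ j) : dist (y i) (y j) ≤ k * ultra y i j := by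
  have hk : (0:ℝ) < k := by exact_mod_cast (Nat.lt_of_le_of_lt (Nat.zero_le _) i.2)
  rw [mul_comm, ← div_le_iff₀ hk]
  refine le_of_forall_gt fun t ht => ?_
  obtain ⟨t', h1, h2⟩ := exists_between ht
  obtain ⟨h0, hr⟩ := ultra_reach y i j hij h1
  obtain ⟨p, hp⟩ := hr.exists_isPath
  have hl := hp.length_lt
  rw [Fintype.card_fin] at hl
  have := thrG_walk y t' i j p
  have hl' : (p.length : ℝ) ≤ k := by exact_mod_cast hl.le
  refine lt_of_le_of_lt ?_ h2
  rw [div_le_iff₀ hk]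
  nlinarith

lemma minBeta_le_zero {k d : ℕ} {τ : ℝ} {α : Fin k → ℝ} {β : Fin k → Fin k → ℝ}
    (h : Feasible τ d α β) (j : Fin k) : minBeta β j ≤ 0 := by
  unfold minBeta
  apply Real.sInf_nonpos
  rintro x ⟨i, hi, rfl⟩
  exact (h.2.1 i j hi).2

open scoped Classical in
lemma fExp_le {k d : ℕ} {τ γ : ℝ} (hτ : τ ∈ Set.Ioo (2:ℝ) 3) (hγ : 1 < γ)
    (H : SimpleGraph (Fin k)) {α : Fin k → ℝ} {β : Fin k → Fin k → ℝ}
    (h : Feasible τ d α β) : fExp τ γ d H α β ≤ k := by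
  unfold fExp
  have h1 : (1 - τ) * ∑ i, α i ≤ 0 := by
    apply mul_nonpos_of_nonpos_of_nonneg
    · linarith [hτ.1]
    · exact Finset.sum_nonneg fun i _ => (h.1 i).1
  have h2 : (d:ℝ) * ∑ j, minBeta β j ≤ 0 := by
    apply mul_nonpos_of_nonneg_of_nonpos
    · positivity
    · exact Finset.sum_nonpos fun i _ => minBeta_le_zero h i
  have h3 : γ * ∑ p ∈ Finset.univ.filter (fun p : Fin k × Fin k => p.1 < p.2 ∧ H.Adj p.1 p.2),
        min (α p.1 + α p.2 - (d : ℝ) * β p.1 p.2 - 1) 0 ≤ 0 := by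
    apply mul_nonpos_of_nonneg_of_nonpos
    · linarith
    · exact Finset.sum_nonpos fun i _ => min_le_right _ _
  linarith

lemma fExp_le_opt {k d : ℕ} {τ γ : ℝ} (hτ : τ ∈ Set.Ioo (2:ℝ) 3) (hγ : 1 < γ)
    (H : SimpleGraph (Fin k)) (s : StarKind) {α : Fin k → ℝ} {β : Fin k → Fin k → ℝ}
    (h : Feasible τ d α β) (hi : s = StarKind.ind → IndConstr d H α β) :
    fExp τ γ d H α β ≤ starOptVal s τ γ d H := by
  cases s with
  | sub =>
    refine le_csSup ⟨k, ?_⟩ ⟨α, β, h, rfl⟩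
    rintro x ⟨a, b, hab, rfl⟩
    exact fExp_le hτ hγ H hab
  | ind =>
    refine le_csSup ⟨k, ?_⟩ ⟨α, β, h, hi rfl, rfl⟩
    rintro x ⟨a, b, hab, _, rfl⟩
    exact fExp_le hτ hγ H hab

/-- deterministic approximation: a configuration is close to a feasible point -/
lemma exists_feasible {k d : ℕ} (hd : 1 ≤ d) (τ : ℝ) (hτ : τ ∈ Set.Ioo (2:ℝ) 3)
    (H : SimpleGraph (Fin k)) (s : StarKind) (εbar : ℝ) (hεbar : 0 < εbar) (m : ℝ) (hm : 0 < m)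
    {Y : Type*} [PseudoMetricSpace Y] (n : ℕ) (hn : 2 ≤ n) (W : Fin k → ℝ) (y : Fin k → Y)
    (hW1 : ∀ i, 1 ≤ W i) (hW2 : ∀ i, W i < (n:ℝ) ^ (1 / (τ - 1)) / εbar)
    (hy1 : ∀ i j, i ≠ j → εbar * (n : ℝ) ^ (-(1 / (d : ℝ))) < dist (y i) (y j))
    (hy2 : ∀ i j, dist (y i) (y j) ≤ 1)
    (hind : s = StarKind.ind → ∀ i j, i < j → ¬ H.Adj i j →
      W i * W j ≤ (n:ℝ) * m * dist (y i) (y j) ^ d) :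
    ∃ α β, Feasible τ d α β ∧ (s = StarKind.ind → IndConstr d H α β) ∧
      (∀ i, Real.log (W i) - (|Real.log m| + d * Real.log k + |Real.log εbar|) ≤
        α i * Real.log n ∧ α i * Real.log n ≤ Real.log (W i)) ∧
      (∀ i j, i < j → Real.log (dist (y i) (y j)) - Real.log k ≤ β i j * Real.log n ∧
        β i j * Real.log n ≤ Real.log (dist (y i) (y j)) + |Real.log εbar|) := by
  have hn1 : (1:ℝ) < n := by exact_mod_cast hn
  have hn0 : (0:ℝ) < n := by linarith
  set L := Real.log n with hL
  have hL0 : 0 < L := Real.log_pos hn1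
  have hdR : (1:ℝ) ≤ d := by exact_mod_cast hd
  have hd0 : (0:ℝ) < d := by linarith
  have hlk : 0 ≤ Real.log k := Real.log_natCast_nonneg k
  set A := |Real.log m| + d * Real.log k + |Real.log εbar| with hA
  have hA0 : 0 ≤ A := by positivity
  have hW0 : ∀ i, 0 ≤ Real.log (W i) := fun i => Real.log_nonneg (hW1 i)
  have hWpos : ∀ i, 0 < W i := fun i => by linarith [hW1 i]
  have hWl : ∀ i, Real.log (W i) ≤ 1 / (τ - 1) * L + |Real.log εbar| := by
    intro i
    have h1 := Real.log_le_log (hWpos i) (hW2 i).le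
    rw [Real.log_div (by positivity) hεbar.ne', Real.log_rpow hn0] at h1
    linarith [neg_abs_le (Real.log εbar)]
  have hDpos : ∀ i j, i ≠ j → 0 < dist (y i) (y j) := fun i j h =>
    lt_trans (by positivity) (hy1 i j h)
  have hDl : ∀ i j, i ≠ j → -(1/(d:ℝ)) * L - |Real.log εbar| ≤ Real.log (dist (y i) (y j)) := by
    intro i j h
    have h1 := Real.log_le_log (by positivity) (hy1 i j h).le
    rw [Real.log_mul hεbar.ne' (by positivity), Real.log_rpow hn0] at h1
    linarith [neg_abs_le (Real.log εbar)]
  have hUpos : ∀ i j, i ≠ j → 0 < ultra y i j := by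
    intro i j h
    have hk : (0:ℝ) < k := by exact_mod_cast (Nat.lt_of_le_of_lt (Nat.zero_le _) i.2)
    have := lt_of_lt_of_le (hDpos i j h) (le_ultra y i j h)
    exact pos_of_mul_pos_right this hk.le
  have hUl : ∀ i j, i ≠ j → Real.log (dist (y i) (y j)) - Real.log k ≤ Real.log (ultra y i j) := by
    intro i j h
    have hk : (0:ℝ) < k := by exact_mod_cast (Nat.lt_of_le_of_lt (Nat.zero_le _) i.2)
    have h1 := Real.log_le_log (hDpos i j h) (le_ultra y i j h)
    rw [Real.log_mul hk.ne' (hUpos i j h).ne'] at h1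
    linarith
  have hUl2 : ∀ i j, i ≠ j → Real.log (ultra y i j) ≤ Real.log (dist (y i) (y j)) := fun i j h =>
    Real.log_le_log (hUpos i j h) (ultra_le y i j h)
  set α : Fin k → ℝ := fun i => max 0 (Real.log (W i) - A) / L with hα
  set β : Fin k → Fin k → ℝ := fun i j => max (-(1/(d:ℝ))) (Real.log (ultra y i j) / L) with hβ
  have hαL : ∀ i, α i * L = max 0 (Real.log (W i) - A) := fun i => div_mul_cancel₀ _ hL0.ne'
  have hβL : ∀ i j, β i j * L = max (-(1/(d:ℝ)) * L) (Real.log (ultra y i j)) := by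
    intro i j
    rw [hβ]
    simp only
    rw [max_mul_of_nonneg _ _ hL0.le, div_mul_cancel₀ _ hL0.ne']
  have hβs : ∀ i j, bsym β i j = β i j := by
    intro i j
    unfold bsym
    split_ifs
    · rfl
    · simp only [hβ]; rw [ultra_symm]
  have hα1 : ∀ i, Real.log (W i) - A ≤ α i * L ∧ α i * L ≤ Real.log (W i) := by
    intro i
    rw [hαL]
    exact ⟨le_max_right _ _, max_le (hW0 i) (by linarith)⟩
  have hβ1 : ∀ i j, i ≠ j → Real.log (dist (y i) (y j)) - Real.log k ≤ β i j * L ∧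
        β i j * L ≤ Real.log (dist (y i) (y j)) + |Real.log εbar| := by
    intro i j h
    rw [hβL]
    refine ⟨(hUl i j h).trans (le_max_right _ _), max_le ?_ ?_⟩
    · linarith [hDl i j h]
    · linarith [hUl2 i j h, abs_nonneg (Real.log εbar)]
  refine ⟨α, β, ⟨?_, ?_, ?_⟩, ?_, hα1, fun i j h => hβ1 i j h.ne⟩
  · intro i
    refine ⟨by positivity, ?_⟩
    rw [hα]
    simp only
    rw [div_le_iff₀ hL0]
    have : 0 ≤ 1 / (τ - 1) := by have := hτ.1; apply one_div_nonneg.2; linarith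
    refine max_le (by positivity) ?_
    have : 0 ≤ |Real.log m| := abs_nonneg _
    have : 0 ≤ (d:ℝ) * Real.log k := by positivity
    linarith [hWl i]
  · intro i j h
    refine ⟨le_max_left _ _, max_le ?_ ?_⟩
    · have : 0 ≤ 1/(d:ℝ) := by positivity
      linarith
    · apply div_nonpos_of_nonpos_of_nonneg _ hL0.le
      exact (hUl2 i j h.ne).trans (Real.log_nonpos dist_nonneg (hy2 i j))
  · intro i j s hij hsi hsj
    rw [hβs, hβs]
    simp only [hβ]
    rcases le_max_iff.1 (ultra_tri y i j s hsi hsj) with h | h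
    · refine le_trans ?_ (le_max_left _ _)
      refine max_le_max le_rfl ?_
      gcongr
      exact hUpos i j hij.ne
    · refine le_trans ?_ (le_max_right _ _)
      refine max_le_max le_rfl ?_
      gcongr
      exact hUpos i j hij.ne
  · intro hs i j hij hadj
    have h1 := hind hs i j hij hadj
    have h2 := Real.log_le_log (mul_pos (hWpos i) (hWpos j)) h1
    have hD := hDpos i j hij.ne
    rw [Real.log_mul (hWpos i).ne' (hWpos j).ne', Real.log_mul (by positivity) (by positivity),
      Real.log_mul (by positivity) (by positivity), Real.log_pow] at h2
    have h3 := (hβ1 i j hij.ne).1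
    have h4 : -1 ≤ d * β i j := by
      have : -(1/(d:ℝ)) ≤ β i j := le_max_left _ _
      calc (-1:ℝ) = d * (-(1/(d:ℝ))) := by field_simp
        _ ≤ _ := by gcongr
    have h5 : Real.log m ≤ |Real.log m| := le_abs_self _
    have h6 : 0 ≤ |Real.log εbar| := abs_nonneg _
    have h7 : d * (Real.log (dist (y i) (y j)) - Real.log k) ≤ d * (β i j * L) := by gcongr
    have h8 : (α i + α j) * L ≤ (1 + d * β i j) * L := by
      rw [add_mul, hαL, hαL]
      have := hW0 i
      have := hW0 j
      have h9 : 0 ≤ (1 + d * β i j) * L := by apply mul_nonneg _ hL0.le; linarith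
      rcases max_cases 0 (Real.log (W i) - A) with ⟨e1, _⟩ | ⟨e1, _⟩ <;>
      rcases max_cases 0 (Real.log (W j) - A) with ⟨e2, _⟩ | ⟨e2, _⟩ <;> rw [e1, e2] <;>
      nlinarith
    exact le_of_mul_le_mul_right h8 hL0

open scoped Classical in
lemma key_bound {k d : ℕ} (hd : 1 ≤ d) (τ γ : ℝ) (hτ : τ ∈ Set.Ioo (2:ℝ) 3) (hγ : 1 < γ)
    (H : SimpleGraph (Fin k)) (s : StarKind) (εbar : ℝ) (hεbar : 0 < εbar) (m : ℝ) (hm : 0 < m) :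
    ∃ C : ℝ, 0 < C ∧ ∀ {Y : Type} [PseudoMetricSpace Y] (n : ℕ) (_ : 2 ≤ n) (W : Fin k → ℝ)
    (y : Fin k → Y)
    (_ : ∀ i, 1 ≤ W i) (_ : ∀ i, W i < (n:ℝ) ^ (1 / (τ - 1)) / εbar)
    (_ : ∀ i j, i ≠ j → εbar * (n : ℝ) ^ (-(1 / (d : ℝ))) < dist (y i) (y j))
    (_ : ∀ i j, dist (y i) (y j) ≤ 1)
    (_ : s = StarKind.ind → ∀ i j, i < j → ¬ H.Adj i j →
      W i * W j ≤ (n:ℝ) * m * dist (y i) (y j) ^ d),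
    ∏ p ∈ Finset.univ.filter (fun p : Fin k × Fin k => p.1 < p.2 ∧ H.Adj p.1 p.2),
      min 1 ((W p.1 * W p.2 / ((n:ℝ) * m * dist (y p.1) (y p.2) ^ d)) ^ γ) ≤
    C * (n:ℝ) ^ (starOptVal s τ γ d H - k) * (∏ i, W i ^ (τ - 1)) *
      ∏ j, (1 + ∑ i ∈ Finset.univ.filter (fun i => i < j), (dist (y i) (y j) ^ d)⁻¹) := by
  set A := |Real.log m| + d * Real.log k + |Real.log εbar| with hA
  set B := γ * (2 * A + d * |Real.log εbar| + |Real.log m|) with hB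
  set P := Finset.univ.filter (fun p : Fin k × Fin k => p.1 < p.2 ∧ H.Adj p.1 p.2) with hP
  set C0 := P.card * B + k * (d * Real.log k) with hC0
  refine ⟨Real.exp C0, Real.exp_pos _, ?_⟩
  intro Y _ n hn W y hW1 hW2 hy1 hy2 hind
  obtain ⟨α, β, hF, hI, hα, hβ⟩ := exists_feasible hd τ hτ H s εbar hεbar m hm n hn W y
    hW1 hW2 hy1 hy2 hind
  have hn1 : (1:ℝ) < n := by exact_mod_cast hn
  have hn0 : (0:ℝ) < n := by linarith
  have hopt := fExp_le_opt hτ hγ H s hF hI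
  set L := Real.log n with hL
  have hL0 : 0 < L := Real.log_pos hn1
  have hdR : (1:ℝ) ≤ d := by exact_mod_cast hd
  have hWpos : ∀ i, 0 < W i := fun i => by linarith [hW1 i]
  have hDpos : ∀ i j, i ≠ j → 0 < dist (y i) (y j) := fun i j h =>
    lt_trans (by positivity) (hy1 i j h)
  have hlk : 0 ≤ Real.log k := Real.log_natCast_nonneg k
  have hq1 : ∀ j, 1 ≤ 1 + ∑ i ∈ Finset.univ.filter (fun i => i < j), (dist (y i) (y j) ^ d)⁻¹ := by
    intro j
    have : 0 ≤ ∑ i ∈ Finset.univ.filter (fun i => i < j), (dist (y i) (y j) ^ d)⁻¹ :=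
      Finset.sum_nonneg fun i _ => by positivity
    linarith
  -- edges
  have hedge : ∀ p ∈ P, Real.log (min 1 ((W p.1 * W p.2 /
      ((n:ℝ) * m * dist (y p.1) (y p.2) ^ d)) ^ γ)) ≤
      γ * min (α p.1 + α p.2 - (d : ℝ) * β p.1 p.2 - 1) 0 * L + B := by
    intro p hp
    obtain ⟨hlt, -⟩ := (Finset.mem_filter.1 hp).2
    have hD := hDpos _ _ hlt.ne
    have hWa := hWpos p.1
    have hWb := hWpos p.2
    have hx : 0 < W p.1 * W p.2 / ((n:ℝ) * m * dist (y p.1) (y p.2) ^ d) := by positivity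
    have hlx : Real.log (W p.1 * W p.2 / ((n:ℝ) * m * dist (y p.1) (y p.2) ^ d)) =
        Real.log (W p.1) + Real.log (W p.2) - (L + Real.log m +
          d * Real.log (dist (y p.1) (y p.2))) := by
      rw [Real.log_div (by positivity) (by positivity), Real.log_mul hWa.ne' hWb.ne',
        Real.log_mul (by positivity) (by positivity), Real.log_mul (by positivity) (by positivity),
        Real.log_pow]
    have hBn : 0 ≤ 2 * A + d * |Real.log εbar| + |Real.log m| := by positivity
    have ha := (hα p.1).1
    have hb := (hα p.2).1
    have hc : d * (β p.1 p.2 * L) ≤ d * (Real.log (dist (y p.1) (y p.2)) + |Real.log εbar|) := by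
      have := (hβ p.1 p.2 hlt).2
      gcongr
    rcases le_total (α p.1 + α p.2 - (d : ℝ) * β p.1 p.2 - 1) 0 with h0 | h0
    · rw [min_eq_left h0]
      have h1 : Real.log (min 1 ((W p.1 * W p.2 /
      ((n:ℝ) * m * dist (y p.1) (y p.2) ^ d)) ^ γ)) ≤ γ * (Real.log (W p.1) + Real.log (W p.2) -
        (L + Real.log m + d * Real.log (dist (y p.1) (y p.2)))) := by
        rw [← hlx, ← Real.log_rpow hx]
        apply Real.log_le_log
        · exact lt_min one_pos (by positivity)
        · exact min_le_right _ _
      refine h1.trans ?_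
      rw [hB, mul_assoc, ← mul_add]
      have hlm := neg_abs_le (Real.log m)
      apply mul_le_mul_of_nonneg_left _ (by linarith)
      nlinarith
    · rw [min_eq_right h0]
      have h1 : Real.log (min 1 ((W p.1 * W p.2 /
      ((n:ℝ) * m * dist (y p.1) (y p.2) ^ d)) ^ γ)) ≤ 0 := by
        apply Real.log_nonpos
        · positivity
        · exact min_le_left _ _
      have : 0 ≤ B := by apply mul_nonneg _ hBn; linarith
      linarith
  have hbeta : ∀ j, -(d * (minBeta β j * L)) ≤ Real.log (1 + ∑ i ∈ Finset.univ.filter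
      (fun i => i < j), (dist (y i) (y j) ^ d)⁻¹) + d * Real.log k := by
    intro j
    by_cases he : ∃ i, i < j
    · obtain ⟨i1, hi1⟩ := he
      have hfin : {x : ℝ | ∃ i, i < j ∧ x = β i j}.Finite := by
        refine (Set.finite_range (fun i => β i j)).subset ?_
        rintro x ⟨i, _, rfl⟩
        exact ⟨i, rfl⟩
      have hne : {x : ℝ | ∃ i, i < j ∧ x = β i j}.Nonempty := ⟨_, i1, hi1, rfl⟩
      obtain ⟨i0, hi0, he0⟩ := hne.csInf_mem hfin
      have he0' : minBeta β j = β i0 j := he0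
      rw [he0']
      have h1 := (hβ i0 j hi0).1
      have hD := hDpos i0 j hi0.ne
      have h2 : Real.log ((dist (y i0) (y j) ^ d)⁻¹) ≤ Real.log (1 + ∑ i ∈ Finset.univ.filter
          (fun i => i < j), (dist (y i) (y j) ^ d)⁻¹) := by
        apply Real.log_le_log (by positivity)
        have := Finset.single_le_sum (f := fun i => (dist (y i) (y j) ^ d)⁻¹)
          (s := Finset.univ.filter (fun i => i < j)) (fun i _ => by positivity)
          (Finset.mem_filter.2 ⟨Finset.mem_univ i0, hi0⟩)
        linarith
      rw [Real.log_inv, Real.log_pow] at h2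
      have h3 : d * (Real.log (dist (y i0) (y j)) - Real.log k) ≤ d * (β i0 j * L) := by gcongr
      linarith
    · have hz : minBeta β j = 0 := by
        have : {x : ℝ | ∃ i, i < j ∧ x = β i j} = ∅ := by
          ext x
          simp only [Set.mem_ofPred_eq, Set.mem_empty_iff_false, iff_false]
          rintro ⟨i, hi, _⟩
          exact he ⟨i, hi⟩
        unfold minBeta
        rw [this, Real.sInf_empty]
      rw [hz]
      have := Real.log_nonneg (hq1 j)
      have : 0 ≤ d * Real.log k := by positivity
      linarith
  -- positivity
  have hppos : ∀ p ∈ P, 0 < min 1 ((W p.1 * W p.2 /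
      ((n:ℝ) * m * dist (y p.1) (y p.2) ^ d)) ^ γ) := by
    intro p hp
    obtain ⟨hlt, -⟩ := (Finset.mem_filter.1 hp).2
    have hD := hDpos _ _ hlt.ne
    have hWa := hWpos p.1
    have hWb := hWpos p.2
    exact lt_min one_pos (by positivity)
  have hprod1 : 0 < ∏ i, W i ^ (τ - 1) := Finset.prod_pos fun i _ => Real.rpow_pos_of_pos (hWpos i) _
  have hprod2 : 0 < ∏ j, (1 + ∑ i ∈ Finset.univ.filter (fun i => i < j), (dist (y i) (y j) ^ d)⁻¹) :=
    Finset.prod_pos fun j _ => lt_of_lt_of_le one_pos (hq1 j)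
  rw [← Real.log_le_log_iff (Finset.prod_pos hppos) (by positivity)]
  rw [Real.log_mul (by positivity) hprod2.ne', Real.log_mul (by positivity) hprod1.ne',
    Real.log_mul (by positivity) (by positivity), Real.log_exp, Real.log_rpow hn0,
    Real.log_prod (fun p hp => (hppos p hp).ne'),
    Real.log_prod (fun i _ => (Real.rpow_pos_of_pos (hWpos i) _).ne'),
    Real.log_prod (fun j _ => (lt_of_lt_of_le one_pos (hq1 j)).ne')]
  have s1 := Finset.sum_le_sum hedge
  have s2 := Finset.sum_le_sum (fun j (_ : j ∈ Finset.univ) => hbeta j)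
  have s3 : ∑ i, α i * L ≤ ∑ i, Real.log (W i) := Finset.sum_le_sum fun i _ => (hα i).2
  have s4 : ∑ i, Real.log (W i ^ (τ - 1)) = (τ - 1) * ∑ i, Real.log (W i) := by
    rw [Finset.mul_sum]
    exact Finset.sum_congr rfl fun i _ => Real.log_rpow (hWpos i) _
  rw [s4]
  rw [Finset.sum_add_distrib, Finset.sum_const, nsmul_eq_mul] at s1
  rw [Finset.sum_add_distrib, Finset.sum_const, nsmul_eq_mul, Finset.card_univ,
    Fintype.card_fin, Finset.sum_neg_distrib, ← Finset.mul_sum, ← Finset.sum_mul] at s2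
  rw [← Finset.sum_mul] at s3
  rw [← Finset.sum_mul, ← Finset.mul_sum] at s1
  have s5 : fExp τ γ d H α β * L ≤ starOptVal s τ γ d H * L := by gcongr
  unfold fExp at s5
  have hτ1 : 0 ≤ τ - 1 := by linarith [hτ.1]
  have s6 : (τ - 1) * ((∑ i, α i) * L) ≤ (τ - 1) * ∑ i, Real.log (W i) := by gcongr
  rw [← hP] at s5
  rw [← hL]
  linarith

lemma sum_le_harmonic {ι : Type*} (f : ι → ℝ) (K : ℝ) (S : Finset ι)
    (h : ∀ t ∈ S, ((S.filter (fun u => f t ≤ f u)).card : ℝ) * f t ≤ K) (hK : 0 ≤ K) :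
    ∑ u ∈ S, f u ≤ K * (harmonic S.card : ℝ) := by
  classical
  revert h
  refine Finset.induction_on_min_value (motive := fun S : Finset ι => (∀ t ∈ S, ((S.filter (fun u => f t ≤ f u)).card : ℝ) * f t ≤ K) → ∑ u ∈ S, f u ≤ K * (harmonic S.card : ℝ)) f S ?_ ?_
  · intro _; simp
  · intro a s ha hmin ih h
    rw [Finset.sum_insert ha, Finset.card_insert_of_notMem ha, harmonic_succ]
    push_cast
    have h1 : ∑ u ∈ s, f u ≤ K * (harmonic s.card : ℝ) := by
      apply ih
      intro t ht
      have h2 := h t (Finset.mem_insert_of_mem ht)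
      rcases le_total (f t) 0 with h0 | h0
      · exact (mul_nonpos_of_nonneg_of_nonpos (by positivity) h0).trans hK
      · refine le_trans ?_ h2
        apply mul_le_mul_of_nonneg_right _ h0
        exact_mod_cast Finset.card_le_card (Finset.filter_subset_filter _ (Finset.subset_insert _ _))
    have h2 := h a (Finset.mem_insert_self _ _)
    have h3 : (insert a s).filter (fun u => f a ≤ f u) = insert a s := by
      apply Finset.filter_true_of_mem
      intro x hx
      rcases Finset.mem_insert.1 hx with rfl | hx
      · exact le_rfl
      · exact hmin x hx
    rw [h3, Finset.card_insert_of_notMem ha] at h2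
    push_cast at h2
    have h4 : (0:ℝ) < (s.card : ℝ) + 1 := by positivity
    have h5 : f a ≤ K * ((s.card : ℝ) + 1)⁻¹ := by
      rw [← div_eq_mul_inv, le_div_iff₀ h4]; linarith
    linarith

lemma torus_dist_le {d : ℕ} (x y : Torus d) : dist x y ≤ 1 / 2 := by
  rw [dist_pi_le_iff (by norm_num)]
  intro b
  rw [dist_eq_norm]
  have := AddCircle.norm_le_half_period (1:ℝ) (x := x b - y b) one_ne_zero
  simpa using this

lemma torus_vol {d : ℕ} (x : Torus d) {r : ℝ} (hr : 0 ≤ r) :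
    volume (Metric.closedBall x r) = ENNReal.ofReal (min 1 (2 * r)) ^ d := by
  rw [volume_pi_closedBall _ hr]
  simp only [AddCircle.volume_closedBall]
  simp

lemma packing {d n : ℕ} (x : Fin n → Torus d) {r : ℝ} (hr : 0 < r)
    (hx : ∀ u v, u ≠ v → r < dist (x u) (x v)) (v : Fin n) (D : ℝ) (hD : r < D) (hr2 : r ≤ 1) :
    ((Finset.univ.filter (fun u => dist (x u) (x v) ≤ D)).card : ℝ) * r ^ d ≤ (4 * D) ^ d := by
  have hD0 : 0 < D := hr.trans hD
  set S := Finset.univ.filter (fun u => dist (x u) (x v) ≤ D) with hS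
  have hdisj : (S : Set (Fin n)).PairwiseDisjoint (fun u => Metric.closedBall (x u) (r/3)) := by
    intro a _ b _ hab
    apply Metric.closedBall_disjoint_closedBall
    have := hx a b hab
    linarith
  have h1 : volume (⋃ u ∈ S, Metric.closedBall (x u) (r/3)) =
      ∑ u ∈ S, volume (Metric.closedBall (x u) (r/3)) :=
    measure_biUnion_finset hdisj fun u _ => Metric.isClosed_closedBall.measurableSet
  have h2 : (⋃ u ∈ S, Metric.closedBall (x u) (r/3)) ⊆ Metric.closedBall (x v) (D + r/3) := by
    intro z hz
    simp only [Set.mem_iUnion] at hz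
    obtain ⟨u, hu, hz⟩ := hz
    have hu' := (Finset.mem_filter.1 hu).2
    rw [Metric.mem_closedBall] at hz ⊢
    have := dist_triangle z (x u) (x v)
    linarith
  have h3 := measure_mono (μ := (volume : Measure (Torus d))) h2
  rw [h1, torus_vol _ (by linarith)] at h3
  simp only [torus_vol _ (show 0 ≤ r/3 by linarith)] at h3
  rw [Finset.sum_const, nsmul_eq_mul, min_eq_right (by linarith)] at h3
  have h4 : (S.card : ENNReal) * ENNReal.ofReal (2 * (r/3)) ^ d ≤
      ENNReal.ofReal (2 * (D + r/3)) ^ d :=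
    h3.trans (by gcongr; exact min_le_right _ _)
  rw [← ENNReal.ofReal_pow (by linarith), ← ENNReal.ofReal_pow (by linarith),
    ← ENNReal.ofReal_natCast, ← ENNReal.ofReal_mul (by positivity),
    ENNReal.ofReal_le_ofReal_iff (by positivity)] at h4
  have h5 : (S.card : ℝ) * r ^ d = S.card * (2 * (r/3))^d * (3/2)^d := by
    rw [mul_assoc, ← mul_pow]; congr 2; ring
  rw [h5]
  calc (S.card : ℝ) * (2 * (r/3))^d * (3/2)^d ≤ (2 * (D + r/3)) ^ d * (3/2)^d := by gcongr
    _ = (3 * D + r) ^ d := by rw [← mul_pow]; congr 1; ring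
    _ ≤ (4 * D) ^ d := by gcongr; linarith

lemma inv_dist_sum {d n : ℕ} (hd : 1 ≤ d) (hn : 1 ≤ n) (x : Fin n → Torus d) {ε : ℝ} (hε : 0 < ε)
    (hx : ∀ u v, u ≠ v → ε * (n : ℝ) ^ (-(1 / (d : ℝ))) < dist (x u) (x v)) (v : Fin n) :
    ∑ u, (dist (x v) (x u) ^ d)⁻¹ ≤ (4 / ε) ^ d * n * (1 + Real.log n) := by
  classical
  have hn0 : (0:ℝ) < n := by exact_mod_cast hn
  set r := ε * (n : ℝ) ^ (-(1 / (d : ℝ))) with hrdef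
  have hr : 0 < r := by positivity
  have hd0 : (d:ℝ) ≠ 0 := by positivity
  have hrd : r ^ d = ε ^ d * (n:ℝ)⁻¹ := by
    rw [hrdef, mul_pow, ← Real.rpow_natCast ((n:ℝ) ^ (-(1 / (d : ℝ)))), ← Real.rpow_mul hn0.le]
    congr 1
    rw [← Real.rpow_neg_one]
    congr 1
    field_simp
  have h1 : ∑ u, (dist (x v) (x u) ^ d)⁻¹ =
      ∑ u ∈ Finset.univ.erase v, (dist (x v) (x u) ^ d)⁻¹ := by
    rw [← Finset.add_sum_erase _ _ (Finset.mem_univ v)]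
    simp [show d ≠ 0 by omega]
  rw [h1]
  have hK : 0 ≤ (4 / ε) ^ d * n := by positivity
  refine (sum_le_harmonic _ ((4 / ε) ^ d * n) _ ?_ hK).trans ?_
  · intro t ht
    have htv : t ≠ v := (Finset.mem_erase.1 ht).1
    have hD := hx v t htv.symm
    have hDpos : 0 < dist (x v) (x t) := hr.trans hD
    have hp := packing x hr hx v (dist (x v) (x t)) hD
      (by have := torus_dist_le (x v) (x t); linarith)
    have hc : (((Finset.univ.erase v).filter (fun u => (dist (x v) (x t) ^ d)⁻¹ ≤
        (dist (x v) (x u) ^ d)⁻¹)).card : ℝ) ≤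
        ((Finset.univ.filter (fun u => dist (x u) (x v) ≤ dist (x v) (x t))).card : ℝ) := by
      norm_cast
      apply Finset.card_le_card
      intro u hu
      rw [Finset.mem_filter] at hu ⊢
      refine ⟨Finset.mem_univ _, ?_⟩
      have huv : u ≠ v := (Finset.mem_erase.1 hu.1).1
      have hDu : 0 < dist (x v) (x u) := hr.trans (hx v u huv.symm)
      have h2 := (inv_le_inv₀ (by positivity) (by positivity)).1 hu.2
      rw [dist_comm]
      exact (pow_le_pow_iff_left₀ hDu.le hDpos.le (by omega)).1 h2
    rw [← div_eq_mul_inv, div_le_iff₀ (by positivity)]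
    refine hc.trans ?_
    have hrp : 0 < r ^ d := by positivity
    rw [← le_div_iff₀ hrp] at hp
    refine hp.trans (le_of_eq ?_)
    rw [hrd, mul_pow, div_pow]
    field_simp
  · apply mul_le_mul_of_nonneg_left _ hK
    refine le_trans (harmonic_le_one_add_log _) ?_
    refine add_le_add le_rfl ?_
    rcases Nat.eq_zero_or_pos (Finset.univ.erase v).card with h0 | h0
    · rw [h0, Nat.cast_zero, Real.log_zero]; exact Real.log_natCast_nonneg n
    · apply Real.log_le_log (by exact_mod_cast h0)
      have := Finset.card_erase_le (s := (Finset.univ : Finset (Fin n))) (a := v)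
      rw [Finset.card_univ, Fintype.card_fin] at this
      exact_mod_cast this

lemma sum_tuple {n : ℕ} (g : Fin n → Fin n → ℝ) (hg : ∀ a b, 0 ≤ g a b) (R : ℝ) (hR : 0 ≤ R)
    (h : ∀ a, ∑ b, g a b ≤ R) (K : ℕ) (k : ℕ) (hk : k ≤ K) :
    ∑ v : Fin k → Fin n, ∏ j, (1 + ∑ i ∈ Finset.univ.filter (fun i => i < j), g (v i) (v j)) ≤
      (n + K * R) ^ k := by
  induction k with
  | zero => simp
  | succ k ih =>
    have ih' := ih (by omega)
    rw [← (Fin.snocEquiv (fun _ : Fin (k+1) => Fin n)).sum_comp, Fintype.sum_prod_type_right]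
    have hterm : ∀ (v : Fin k → Fin n), ∑ u : Fin n, ∏ j : Fin (k+1), (1 + ∑ i ∈ Finset.univ.filter (fun i => i < j),
          g ((Fin.snocEquiv (fun _ : Fin (k+1) => Fin n)) (u, v) i) ((Fin.snocEquiv (fun _ : Fin (k+1) => Fin n)) (u, v) j)) =
        (∏ j, (1 + ∑ i ∈ Finset.univ.filter (fun i => i < j), g (v i) (v j))) *
         ∑ u, (1 + ∑ i, g (v i) u) := by
      intro v
      rw [Finset.mul_sum]
      refine Finset.sum_congr rfl fun u _ => ?_
      rw [Fin.prod_univ_castSucc]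
      congr 1
      · refine Finset.prod_congr rfl fun j _ => ?_
        congr 1
        rw [Finset.sum_filter, Finset.sum_filter, Fin.sum_univ_castSucc]
        simp [Fin.snocEquiv, Fin.castSucc_lt_castSucc_iff, (Fin.le_last _).not_gt]
      · congr 1
        rw [Finset.sum_filter, Fin.sum_univ_castSucc]
        simp [Fin.snocEquiv, Fin.castSucc_lt_last]
    rw [Finset.sum_congr rfl fun v _ => hterm v, pow_succ]
    refine le_trans ?_ (mul_le_mul_of_nonneg_right ih' (by positivity))
    rw [Finset.sum_mul]
    refine Finset.sum_le_sum fun v _ => ?_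
    apply mul_le_mul_of_nonneg_left
    · rw [Finset.sum_add_distrib, Finset.sum_comm]
      have : ∑ i, ∑ u, g (v i) u ≤ ∑ i : Fin k, R := Finset.sum_le_sum fun i _ => h (v i)
      simp only [Finset.sum_const, Finset.card_univ, Fintype.card_fin, nsmul_eq_mul, mul_one] at this ⊢
      have h2 : (k:ℝ) * R ≤ K * R := by
        gcongr; omega
      linarith
    · refine Finset.prod_nonneg fun j _ => ?_
      have : 0 ≤ ∑ i ∈ Finset.univ.filter (fun i => i < j), g (v i) (v j) :=
        Finset.sum_nonneg fun i _ => hg _ _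
      linarith

lemma moment_finite {τ c : ℝ} (μW : Measure ℝ) [IsProbabilityMeasure μW]
    (hW : WeightTail τ c μW) (s : ℝ) (hs : 0 < s) (hs2 : s < τ - 1) :
    ∫⁻ w, ENNReal.ofReal (w ^ s) ∂μW < ⊤ := by
  obtain ⟨hc, h1, ht⟩ := hW
  have hnn : 0 ≤ᵐ[μW] fun w : ℝ => w := by
    have : ∀ᵐ w ∂μW, w ∉ Set.Iio (1:ℝ) := measure_eq_zero_iff_ae_notMem.1 h1
    filter_upwards [this] with w hw
    simp only [Set.mem_Iio, not_lt] at hw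
    simp only [Pi.zero_apply]
    linarith
  rw [lintegral_rpow_eq_lintegral_meas_lt_mul μW hnn aemeasurable_id hs]
  refine ENNReal.mul_lt_top ENNReal.ofReal_lt_top ?_
  obtain ⟨T0, hT0⟩ := eventually_atTop.1 ((ht.eventually (eventually_le_nhds (show (1:ℝ) < 2 by norm_num))))
  set T := max T0 1 with hT
  have hT1 : 1 ≤ T := le_max_right _ _
  have htail : ∀ t, T ≤ t → μW {a | t < a} ≤ ENNReal.ofReal (2 * c * t ^ (1 - τ)) := by
    intro t h
    have h2 := hT0 t ((le_max_left _ _).trans h)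
    have htp : 0 < t := by linarith
    rw [div_le_iff₀ (by positivity)] at h2
    have h3 : μW {a | t < a} = μW (Set.Ioi t) := rfl
    rw [h3, ← ENNReal.ofReal_toReal (measure_ne_top μW (Set.Ioi t))]
    apply ENNReal.ofReal_le_ofReal
    linarith
  have hsplit : Set.Ioi (0:ℝ) ⊆ Set.Ioc 0 T ∪ Set.Ioi T := by
    intro t ht
    rcases le_or_gt t T with h | h
    · exact Or.inl ⟨ht, h⟩
    · exact Or.inr h
  refine lt_of_le_of_lt (lintegral_mono_set hsplit) (lt_of_le_of_lt (lintegral_union_le _ _ _) ?_)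
  refine ENNReal.add_lt_top.2 ⟨?_, ?_⟩
  · have hi : IntervalIntegrable (fun t : ℝ => t ^ (s - 1)) volume 0 T :=
      intervalIntegral.intervalIntegrable_rpow' (by linarith)
    rw [intervalIntegrable_iff_integrableOn_Ioc_of_le (by linarith)] at hi
    refine lt_of_le_of_lt ?_ hi.lintegral_lt_top
    refine lintegral_mono fun t => ?_
    calc _ ≤ 1 * ENNReal.ofReal (t ^ (s - 1)) := by gcongr; exact prob_le_one
      _ = _ := one_mul _
  · have hi : IntegrableOn (fun t : ℝ => 2 * c * t ^ (1 - τ + (s - 1))) (Set.Ioi T) :=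
      (integrableOn_Ioi_rpow_of_lt (by linarith) (by linarith)).const_mul _
    refine lt_of_le_of_lt ?_ hi.lintegral_lt_top
    refine setLIntegral_mono' measurableSet_Ioi fun t ht => ?_
    have htp : 0 < t := by have : T < t := ht; linarith
    calc _ ≤ ENNReal.ofReal (2 * c * t ^ (1 - τ)) * ENNReal.ofReal (t ^ (s - 1)) := by
          gcongr; exact htail t (le_of_lt ht)
      _ = _ := by
          rw [← ENNReal.ofReal_mul (by positivity), mul_assoc, ← Real.rpow_add htp]

lemma wMean_pos {τ c : ℝ} (hτ : τ ∈ Set.Ioo (2:ℝ) 3) (μW : Measure ℝ) [IsProbabilityMeasure μW]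
    (hW : WeightTail τ c μW) : 0 < wMean μW := by
  have hm := moment_finite μW hW 1 one_pos (by linarith [hτ.1])
  have h1 : ∀ᵐ w ∂μW, (1:ℝ) ≤ w := by
    have : ∀ᵐ w ∂μW, w ∉ Set.Iio (1:ℝ) := measure_eq_zero_iff_ae_notMem.1 hW.2.1
    filter_upwards [this] with w hw
    simpa using hw
  have hi : Integrable (fun w : ℝ => w) μW := by
    refine ⟨aestronglyMeasurable_id, ?_⟩
    rw [hasFiniteIntegral_iff_ofReal (by filter_upwards [h1] with w hw; simp only [Pi.zero_apply]; linarith)]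
    simpa using hm
  have : ∫ w, (1:ℝ) ∂μW ≤ ∫ w, w ∂μW := integral_mono_ae (integrable_const _) hi h1
  simp at this
  unfold wMean
  linarith

lemma lintegral_pi_prod' {n : ℕ} {E : Type*} [MeasurableSpace E] (μ : Measure E) [IsFiniteMeasure μ]
    (f : Fin n → E → ENNReal) (hf : ∀ i, Measurable (f i)) :
    ∫⁻ x : Fin n → E, ∏ i, f i (x i) ∂(Measure.pi fun _ => μ) = ∏ i, ∫⁻ x, f i x ∂μ := by
  induction n with
  | zero => simp
  | succ n ih =>
    rw [← ((measurePreserving_piFinSuccAbove (fun _ : Fin (n+1) => μ) 0).symm).lintegral_comp_emb (MeasurableEquiv.measurableEmbedding _)]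
    simp_rw [MeasurableEquiv.piFinSuccAbove_symm_apply, Fin.insertNthEquiv,
            Fin.prod_univ_succ, Fin.insertNth_zero, Equiv.coe_fn_mk, Fin.cons_succ,
            Fin.cons_zero]
    refine Eq.trans (lintegral_prod_mul (f := f 0) (g := fun y : Fin n → E => ∏ i, f (Fin.succ i) (y i))
      (hf 0).aemeasurable (Measurable.aemeasurable ?_)) ?_
    · exact Finset.measurable_prod _ fun i _ => (hf _).comp (measurable_pi_apply i)
    · rw [ih _ fun i => hf _]

/-- law of the coins -/
def coinM (n : ℕ) : Measure (Sym2 (Fin n) → ℝ) :=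
  Measure.pi fun _ : Sym2 (Fin n) => volume.restrict (Set.Icc (0:ℝ) 1)

instance coin1_prob : IsProbabilityMeasure (volume.restrict (Set.Icc (0:ℝ) 1)) :=
  ⟨by simp⟩

instance coinM_prob (n : ℕ) : IsProbabilityMeasure (coinM n) := by
  unfold coinM; infer_instance

lemma coin_zero {n : ℕ} (e : Sym2 (Fin n)) {p : ℝ} (hp : 1 ≤ p) : coinM n {c | p < c e} = 0 := by
  have h : ∀ᵐ t ∂(volume.restrict (Set.Icc (0:ℝ) 1)), t ∈ Set.Icc (0:ℝ) 1 :=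
    ae_restrict_mem measurableSet_Icc
  have h2 := (Measure.tendsto_eval_ae_ae
    (μ := fun _ : Sym2 (Fin n) => volume.restrict (Set.Icc (0:ℝ) 1)) (i := e)).eventually h
  refine measure_mono_null ?_ h2
  intro c hc hc2
  have h3 : c e ≤ 1 := hc2.2
  have h4 : p < c e := hc
  linarith

open scoped Classical in
lemma coin_bound {k n : ℕ} (H : SimpleGraph (Fin k)) (v : Fin k → Fin n)
    (hv : Function.Injective v) (P : Fin k → Fin k → ℝ) :
    coinM n {c | ∀ i j, i < j → H.Adj i j → c s(v i, v j) ≤ P i j} ≤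
      ∏ p ∈ Finset.univ.filter (fun p : Fin k × Fin k => p.1 < p.2 ∧ H.Adj p.1 p.2),
        ENNReal.ofReal (P p.1 p.2) := by
  set S := Finset.univ.filter (fun p : Fin k × Fin k => p.1 < p.2 ∧ H.Adj p.1 p.2) with hS
  let T : Sym2 (Fin n) → Set ℝ := fun e => {t | ∀ p ∈ S, s(v p.1, v p.2) = e → t ≤ P p.1 p.2}
  have h1 : {c : Sym2 (Fin n) → ℝ | ∀ i j, i < j → H.Adj i j → c s(v i, v j) ≤ P i j} ⊆
      Set.pi Set.univ T := by
    intro c hc e _ p hp he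
    have := (Finset.mem_filter.1 hp).2
    rw [← he]
    exact hc p.1 p.2 this.1 this.2
  refine (measure_mono h1).trans ?_
  unfold coinM
  rw [Measure.pi_pi]
  have hinj : Set.InjOn (fun p : Fin k × Fin k => s(v p.1, v p.2)) S := by
    intro p hp q hq hpq
    have hp' := (Finset.mem_filter.1 hp).2.1
    have hq' := (Finset.mem_filter.1 hq).2.1
    simp only [Sym2.eq_iff] at hpq
    rcases hpq with ⟨a, b⟩ | ⟨a, b⟩
    · exact Prod.ext (hv a) (hv b)
    · have a' := hv a
      have b' := hv b
      rw [a', b'] at hp'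
      exact absurd hp' hq'.asymm
  calc ∏ e, volume.restrict (Set.Icc (0:ℝ) 1) (T e)
      ≤ ∏ e ∈ S.image (fun p : Fin k × Fin k => s(v p.1, v p.2)),
          volume.restrict (Set.Icc (0:ℝ) 1) (T e) := by
        apply Finset.prod_le_prod_of_subset_of_le_one' (Finset.subset_univ _)
        intro e _ _
        exact prob_le_one
    _ = ∏ p ∈ S, volume.restrict (Set.Icc (0:ℝ) 1) (T s(v p.1, v p.2)) :=
        Finset.prod_image hinj
    _ ≤ _ := by
        refine Finset.prod_le_prod' fun p hp => ?_
        rw [Measure.restrict_apply' measurableSet_Icc]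
        have : T s(v p.1, v p.2) ∩ Set.Icc 0 1 ⊆ Set.Icc 0 (P p.1 p.2) := by
          rintro t ⟨ht, ht2⟩
          exact ⟨ht2.1, ht p hp rfl⟩
        refine (measure_mono this).trans ?_
        rw [Real.volume_Icc, sub_zero]

/-- injective tuples -/
def injT (k n : ℕ) : Finset (Fin k → Fin n) :=
  open scoped Classical in Finset.univ.filter (fun v => Function.Injective v)

/-- box of coins -/
def boxC {k : ℕ} (s : StarKind) (H : SimpleGraph (Fin k)) (γ m : ℝ) (d n : ℕ) (w : Fin n → ℝ)
    (x : Fin n → Torus d) (v : Fin k → Fin n) : Set (Sym2 (Fin n) → ℝ) :=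
  {c | (∀ i j, i < j → H.Adj i j → c s(v i, v j) ≤ connProb γ m d n w x (v i) (v j)) ∧
    (s = StarKind.ind → ∀ i j, i < j → ¬ H.Adj i j →
      connProb γ m d n w x (v i) (v j) < c s(v i, v j))}

lemma count_le {k : ℕ} (s : StarKind) (H : SimpleGraph (Fin k)) (γ m : ℝ) (d n : ℕ) (w : Fin n → ℝ)
    (x : Fin n → Torus d) (c : Sym2 (Fin n) → ℝ) :
    (starNTotal s H γ m d n (w, x, c) : ENNReal) ≤ ∑ v ∈ injT k n,
      (toMeasurable (coinM n) (boxC s H γ m d n w x v)).indicator 1 c := by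
  classical
  have hle : ∀ S : Set (Fin k → Fin n), (∀ v ∈ S, Function.Injective v ∧
      c ∈ boxC s H γ m d n w x v) → (S.ncard : ENNReal) ≤ ∑ v ∈ injT k n,
      (toMeasurable (coinM n) (boxC s H γ m d n w x v)).indicator 1 c := by
    intro S hS
    have h1 : S.ncard = ∑ v ∈ S.toFinset, 1 := by
      rw [Set.ncard_eq_toFinset_card', Finset.card_eq_sum_ones]
    rw [h1]
    push_cast
    have h2 : S.toFinset ⊆ injT k n := by
      intro v hv
      exact Finset.mem_filter.2 ⟨Finset.mem_univ _, (hS v (Set.mem_toFinset.1 hv)).1⟩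
    refine le_trans (Finset.sum_le_sum fun v hv => ?_) (Finset.sum_le_sum_of_subset h2)
    rw [Set.indicator_of_mem (subset_toMeasurable _ _ (hS v (Set.mem_toFinset.1 hv)).2)]
    rfl
  cases s with
  | sub =>
    refine hle _ ?_
    rintro v ⟨hv, h⟩
    exact ⟨hv, fun i j _ ha => (h i j ha).2, fun h => by cases h⟩
  | ind =>
    refine hle _ ?_
    rintro v ⟨hv, h⟩
    refine ⟨hv, fun i j hij ha => ((h i j hij.ne).1 ha).2, fun _ i j hij ha => ?_⟩
    by_contra hcon
    exact ha ((h i j hij.ne).2 ⟨hv.ne hij.ne, not_lt.1 hcon⟩)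

lemma coin_count {k : ℕ} (s : StarKind) (H : SimpleGraph (Fin k)) (γ m : ℝ) (d n : ℕ) (w : Fin n → ℝ)
    (x : Fin n → Torus d) :
    ∫⁻ c, (starNTotal s H γ m d n (w, x, c) : ENNReal) ∂(coinM n) ≤ ∑ v ∈ injT k n,
      coinM n (boxC s H γ m d n w x v) := by
  refine (lintegral_mono fun c => count_le s H γ m d n w x c).trans ?_
  rw [lintegral_finsetSum]
  · refine Finset.sum_le_sum fun v _ => ?_
    rw [lintegral_indicator_one (measurableSet_toMeasurable _ _), measure_toMeasurable]
  · intro v _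
    exact measurable_one.indicator (measurableSet_toMeasurable _ _)

/-- position factor -/
def Qf {k d n : ℕ} (x : Fin n → Torus d) (v : Fin k → Fin n) : ℝ :=
  ∏ j, (1 + ∑ i ∈ Finset.univ.filter (fun i => i < j), (dist (x (v i)) (x (v j)) ^ d)⁻¹)

lemma pointwise_bound {k d : ℕ} (hd : 1 ≤ d) (τ γ : ℝ) (hτ : τ ∈ Set.Ioo (2:ℝ) 3) (hγ : 1 < γ)
    (H : SimpleGraph (Fin k)) (s : StarKind) (εbar : ℝ) (hεbar : 0 < εbar) (m : ℝ) (hm : 0 < m) :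
    ∃ C : ℝ, 0 < C ∧ ∀ (n : ℕ) (_ : 2 ≤ n) (w : Fin n → ℝ) (x : Fin n → Torus d)
    (_ : ∀ i, 1 ≤ w i) (_ : ∀ i, w i < (n:ℝ) ^ (1 / (τ - 1)) / εbar)
    (_ : ∀ i j, i ≠ j → εbar * (n : ℝ) ^ (-(1 / (d : ℝ))) < dist (x i) (x j)),
    ∫⁻ c, (starNTotal s H γ m d n (w, x, c) : ENNReal) ∂(coinM n) ≤ ∑ v ∈ injT k n,
      ENNReal.ofReal (C * (n:ℝ) ^ (starOptVal s τ γ d H - k)) *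
        (∏ i, ENNReal.ofReal (w (v i) ^ (τ - 1))) * ENNReal.ofReal (Qf x v) := by
  classical
  obtain ⟨C, hC, hkey⟩ := key_bound hd τ γ hτ hγ H s εbar hεbar m hm
  refine ⟨C, hC, ?_⟩
  intro n hn w x hw1 hw2 hx
  refine (coin_count s H γ m d n w x).trans (Finset.sum_le_sum fun v hv => ?_)
  have hinj : Function.Injective v := (Finset.mem_filter.1 hv).2
  have hn0 : (0:ℝ) < n := by positivity
  by_cases hbad : s = StarKind.ind ∧ ∃ i j, i < j ∧ ¬ H.Adj i j ∧
      1 ≤ connProb γ m d n w x (v i) (v j)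
  · obtain ⟨hs, i, j, hij, ha, hp⟩ := hbad
    have : coinM n (boxC s H γ m d n w x v) = 0 := by
      refine measure_mono_null ?_ (coin_zero s(v i, v j) hp)
      intro c hc
      exact hc.2 hs i j hij ha
    rw [this]
    exact zero_le
  · have hb := hkey n hn (fun i => w (v i)) (fun i => x (v i)) (fun i => hw1 _) (fun i => hw2 _)
      (fun i j hij => hx _ _ (hinj.ne hij))
      (fun i j => (torus_dist_le _ _).trans (by norm_num)) (by
        intro hs i j hij ha
        by_contra hcon
        push Not at hcon
        apply hbad
        refine ⟨hs, i, j, hij, ha, ?_⟩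
        have hD : 0 < dist (x (v i)) (x (v j)) :=
          lt_trans (by positivity) (hx _ _ (hinj.ne hij.ne))
        refine le_min le_rfl (Real.one_le_rpow ?_ (by linarith))
        rw [one_le_div (by positivity)]
        exact hcon.le)
    have h1 : coinM n (boxC s H γ m d n w x v) ≤
        ∏ p ∈ Finset.univ.filter (fun p : Fin k × Fin k => p.1 < p.2 ∧ H.Adj p.1 p.2),
        ENNReal.ofReal (connProb γ m d n w x (v p.1) (v p.2)) := by
      refine le_trans (measure_mono ?_) (coin_bound H v hinj
        (fun i j => connProb γ m d n w x (v i) (v j)))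
      intro c hc
      exact hc.1
    refine h1.trans ?_
    have hwn : ∀ i, 0 ≤ w i := fun i => by linarith [hw1 i]
    rw [← ENNReal.ofReal_prod_of_nonneg, ← ENNReal.ofReal_prod_of_nonneg,
      ← ENNReal.ofReal_mul, ← ENNReal.ofReal_mul]
    · exact ENNReal.ofReal_le_ofReal hb
    · refine mul_nonneg (by positivity) (Finset.prod_nonneg fun i _ => Real.rpow_nonneg (hwn _) _)
    · positivity
    · exact fun i _ => Real.rpow_nonneg (hwn _) _
    · intro p _
      have := hwn (v p.1)
      have := hwn (v p.2)
      unfold connProb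
      positivity

/-- admissible positions -/
def Axs (ε : ℝ) (d n : ℕ) : Set (Fin n → Torus d) :=
  {x | ∀ u v : Fin n, u ≠ v → ε * (n : ℝ) ^ (-(1 / (d : ℝ))) < dist (x u) (x v)}

lemma Axs_meas (ε : ℝ) (d n : ℕ) : MeasurableSet (Axs ε d n) := by
  have : Axs ε d n = ⋂ u : Fin n, ⋂ v : Fin n, ⋂ _ : u ≠ v,
      {x | ε * (n : ℝ) ^ (-(1 / (d : ℝ))) < dist (x u) (x v)} := by
    ext x
    simp [Axs]
  rw [this]
  refine MeasurableSet.iInter fun u => MeasurableSet.iInter fun v => MeasurableSet.iInter fun _ => ?_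
  exact (isOpen_lt continuous_const (by fun_prop)).measurableSet

lemma cutoff_eq (τ ε : ℝ) (d n : ℕ) : cutoffEvent τ ε d n =
    (Set.univ.pi fun _ : Fin n => Set.Iio ((n : ℝ) ^ (1 / (τ - 1)) / ε)) ×ˢ
      (Axs ε d n ×ˢ (Set.univ : Set (Sym2 (Fin n) → ℝ))) := by
  ext ω
  simp [cutoffEvent, Axs, Set.mem_pi]

lemma weight_lint {k n : ℕ} (ρ : Measure ℝ) [IsFiniteMeasure ρ] (τ : ℝ) (v : Fin k → Fin n)
    (hv : Function.Injective v) :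
    ∫⁻ w, ∏ i, ENNReal.ofReal (w (v i) ^ (τ - 1)) ∂(Measure.pi fun _ : Fin n => ρ) =
      (∫⁻ t, ENNReal.ofReal (t ^ (τ - 1)) ∂ρ) ^ k * (ρ Set.univ) ^ (n - k) := by
  classical
  set S : Finset (Fin n) := Finset.univ.image v with hS
  have hcard : S.card = k := by
    rw [hS, Finset.card_image_of_injective _ hv]; simp
  have h1 : ∀ w : Fin n → ℝ, ∏ i, ENNReal.ofReal (w (v i) ^ (τ - 1)) =
      ∏ u, (if u ∈ S then (fun t : ℝ => ENNReal.ofReal (t ^ (τ - 1))) else fun _ => 1) (w u) := by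
    intro w
    have h2 : ∏ i, ENNReal.ofReal (w (v i) ^ (τ - 1)) =
        ∏ u ∈ S, ENNReal.ofReal (w u ^ (τ - 1)) := by
      rw [hS, Finset.prod_image hv.injOn]
    rw [h2, ← Finset.prod_filter_mul_prod_filter_not Finset.univ (fun u => u ∈ S)]
    have h3 : Finset.univ.filter (fun u => u ∈ S) = S := by ext; simp
    rw [h3]
    have h5 : ∏ u ∈ Finset.univ.filter (fun u => u ∉ S),
        (if u ∈ S then (fun t : ℝ => ENNReal.ofReal (t ^ (τ - 1))) else fun _ => 1) (w u) = 1 :=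
      Finset.prod_eq_one (fun u hu => by rw [if_neg (Finset.mem_filter.1 hu).2])
    rw [h5, mul_one]
    exact Finset.prod_congr rfl (fun u hu => by rw [if_pos hu])
  simp_rw [h1]
  rw [lintegral_pi_prod' ρ (fun u => (if u ∈ S then (fun t : ℝ => ENNReal.ofReal (t ^ (τ - 1)))
    else fun _ => 1))]
  · rw [← Finset.prod_filter_mul_prod_filter_not Finset.univ (fun u => u ∈ S)]
    have h3 : Finset.univ.filter (fun u => u ∈ S) = S := by ext; simp
    have h4 : (Finset.univ.filter (fun u => u ∉ S)).card = n - k := by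
      rw [Finset.filter_not, h3, Finset.card_sdiff_of_subset (Finset.subset_univ _), hcard]
      simp
    congr 1
    · rw [h3, ← hcard, ← Finset.prod_const]
      exact Finset.prod_congr rfl fun u hu => by rw [if_pos hu]
    · rw [← h4, ← Finset.prod_const]
      refine Finset.prod_congr rfl fun u hu => ?_
      rw [if_neg (Finset.mem_filter.1 hu).2]
      simp
  · intro u
    split_ifs <;> fun_prop

lemma Qf_sum {k d n : ℕ} (hd : 1 ≤ d) (hn : 1 ≤ n) {ε : ℝ} (hε : 0 < ε) (x : Fin n → Torus d)
    (hx : x ∈ Axs ε d n) :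
    ∑ v ∈ injT k n, ENNReal.ofReal (Qf x v) ≤
      ENNReal.ofReal ((n + k * ((4 / ε) ^ d * n * (1 + Real.log n))) ^ k) := by
  have hnn : ∀ v : Fin k → Fin n, 0 ≤ Qf x v := by
    intro v
    unfold Qf
    refine Finset.prod_nonneg fun j _ => ?_
    have : 0 ≤ ∑ i ∈ Finset.univ.filter (fun i => i < j), (dist (x (v i)) (x (v j)) ^ d)⁻¹ :=
      Finset.sum_nonneg fun i _ => by positivity
    linarith
  rw [← ENNReal.ofReal_sum_of_nonneg fun v _ => hnn v]
  apply ENNReal.ofReal_le_ofReal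
  refine le_trans (Finset.sum_le_sum_of_subset_of_nonneg (Finset.subset_univ _)
    fun v _ _ => hnn v) ?_
  have := Real.log_natCast_nonneg n
  exact sum_tuple (fun a b => (dist (x a) (x b) ^ d)⁻¹) (fun a b => by positivity) _
    (by positivity) (fun a => inv_dist_sum hd hn x hε hx a) k k le_rfl

lemma Qf_meas {k d n : ℕ} (v : Fin k → Fin n) :
    Measurable (fun x : Fin n → Torus d => Qf x v) := by
  unfold Qf
  refine Finset.measurable_prod _ fun j _ => measurable_const.add ?_
  refine Finset.measurable_sum _ fun i _ => Measurable.inv ?_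
  have : Continuous fun x : Fin n → Torus d => dist (x (v i)) (x (v j)) ^ d := by fun_prop
  exact this.measurable

lemma total_lint {k d : ℕ} (hd : 1 ≤ d) (τ γ c : ℝ) (hτ : τ ∈ Set.Ioo (2:ℝ) 3) (hγ : 1 < γ)
    (μW : Measure ℝ) [IsProbabilityMeasure μW] (hW : WeightTail τ c μW)
    (H : SimpleGraph (Fin k)) (s : StarKind) (εbar : ℝ) (hεbar : 0 < εbar) :
    ∃ C : ℝ, 0 < C ∧ ∀ (n : ℕ) (_ : 2 ≤ n),
    ∫⁻ ω in cutoffEvent τ εbar d n, (starNTotal s H γ (wMean μW) d n ω : ENNReal)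
      ∂(girgMeasure μW d n) ≤
    ENNReal.ofReal (C * (n:ℝ) ^ (starOptVal s τ γ d H - k)) *
      ENNReal.ofReal ((n + k * ((4 / εbar) ^ d * n * (1 + Real.log n))) ^ k) *
      ((∫⁻ t in Set.Iio ((n : ℝ) ^ (1 / (τ - 1)) / εbar), ENNReal.ofReal (t ^ (τ - 1)) ∂μW) ^ k *
        (μW (Set.Iio ((n : ℝ) ^ (1 / (τ - 1)) / εbar))) ^ (n - k) *
        (volume : Measure (Fin n → Torus d)) (Axs εbar d n)) := by
  obtain ⟨C, hC, hpt⟩ := pointwise_bound hd τ γ hτ hγ H s εbar hεbar (wMean μW) (wMean_pos hτ μW hW)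
  refine ⟨C, hC, ?_⟩
  intro n hn
  set M := (n : ℝ) ^ (1 / (τ - 1)) / εbar with hM
  set ρ := μW.restrict (Set.Iio M) with hρ
  set ξ := (volume : Measure (Fin n → Torus d)).restrict (Axs εbar d n) with hξ
  have hmeas : (girgMeasure μW d n).restrict (cutoffEvent τ εbar d n) =
      (Measure.pi fun _ : Fin n => ρ).prod (ξ.prod (coinM n)) := by
    rw [cutoff_eq, hξ, hρ, ← Measure.restrict_pi_pi]
    conv_rhs => rw [← Measure.restrict_univ (μ := coinM n)]
    rw [Measure.prod_restrict, Measure.prod_restrict]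
    rfl
  rw [hmeas]
  set a := ENNReal.ofReal (C * (n:ℝ) ^ (starOptVal s τ γ d H - k)) with ha
  set b := (∫⁻ t, ENNReal.ofReal (t ^ (τ - 1)) ∂ρ) ^ k * (ρ Set.univ) ^ (n - k) with hb
  set G : (Fin n → ℝ) → (Fin n → Torus d) → ENNReal := fun w x => ∑ v ∈ injT k n,
    a * (∏ i, ENNReal.ofReal (w (v i) ^ (τ - 1))) * ENNReal.ofReal (Qf x v) with hG
  have hw1 : ∀ᵐ t ∂ρ, 1 ≤ t ∧ t < M := by
    have h1 : ∀ᵐ t ∂ρ, t ∉ Set.Iio (1:ℝ) :=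
      ae_restrict_of_ae (measure_eq_zero_iff_ae_notMem.1 hW.2.1)
    have h2 : ∀ᵐ t ∂ρ, t ∈ Set.Iio M := ae_restrict_mem measurableSet_Iio
    filter_upwards [h1, h2] with t h1 h2
    exact ⟨not_lt.1 h1, h2⟩
  have hw : ∀ᵐ w ∂(Measure.pi fun _ : Fin n => ρ), ∀ i, 1 ≤ w i ∧ w i < M :=
    ae_all_iff.2 fun i => (Measure.tendsto_eval_ae_ae (μ := fun _ : Fin n => ρ) (i := i)).eventually hw1
  have hx : ∀ᵐ x ∂ξ, x ∈ Axs εbar d n := ae_restrict_mem (Axs_meas _ _ _)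
  have step1 : ∫⁻ ω, (starNTotal s H γ (wMean μW) d n ω : ENNReal)
      ∂((Measure.pi fun _ : Fin n => ρ).prod (ξ.prod (coinM n))) ≤
      ∫⁻ w, ∫⁻ x, G w x ∂ξ ∂(Measure.pi fun _ : Fin n => ρ) := by
    refine (lintegral_prod_le _).trans (lintegral_mono_ae ?_)
    filter_upwards [hw] with w hw
    refine (lintegral_prod_le _).trans (lintegral_mono_ae ?_)
    filter_upwards [hx] with x hx
    exact hpt n hn w x (fun i => (hw i).1) (fun i => (hw i).2) hx
  refine step1.trans ?_
  have hWm : ∀ v : Fin k → Fin n, Measurable fun w : Fin n → ℝ =>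
      ∏ i, ENNReal.ofReal (w (v i) ^ (τ - 1)) := fun v => by fun_prop
  rw [lintegral_lintegral_swap]
  · have step2 : ∀ x ∈ Axs εbar d n, ∫⁻ w, G w x ∂(Measure.pi fun _ : Fin n => ρ) ≤
        a * ENNReal.ofReal ((n + k * ((4 / εbar) ^ d * n * (1 + Real.log n))) ^ k) * b := by
      intro x hx
      simp only [hG]
      rw [lintegral_finsetSum _ fun v _ => ((hWm v).const_mul _).mul_const _]
      have : ∀ v ∈ injT k n, ∫⁻ w, a * (∏ i, ENNReal.ofReal (w (v i) ^ (τ - 1))) *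
          ENNReal.ofReal (Qf x v) ∂(Measure.pi fun _ : Fin n => ρ) =
          a * b * ENNReal.ofReal (Qf x v) := by
        intro v hv
        rw [lintegral_mul_const _ ((hWm v).const_mul _), lintegral_const_mul _ (hWm v),
          weight_lint ρ τ v (Finset.mem_filter.1 hv).2]
      rw [Finset.sum_congr rfl this, ← Finset.mul_sum]
      calc _ ≤ a * b * ENNReal.ofReal ((n + k * ((4 / εbar) ^ d * n * (1 + Real.log n))) ^ k) := by
            gcongr
            exact Qf_sum hd (by omega) hεbar x hx
        _ = _ := by ring
    refine (lintegral_mono_ae (hx.mono step2)).trans ?_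
    rw [lintegral_const, hξ, Measure.restrict_apply_univ, hb, hρ, Measure.restrict_apply_univ]
    apply le_of_eq
    ring
  · refine Measurable.aemeasurable ?_
    refine Finset.measurable_sum _ fun v _ => ?_
    refine Measurable.mul (((hWm v).comp measurable_fst).const_mul _) ?_
    exact ((Qf_meas v).comp measurable_snd).ennreal_ofReal

lemma ofReal_split {X Z Y : ℝ} (hX : 0 ≤ X) (hZ : 0 ≤ Z) (hY : 0 ≤ Y) (k : ℕ) :
    ENNReal.ofReal (X * Z * (Y ^ k * 2 ^ k)) =
      ENNReal.ofReal X * ENNReal.ofReal Z * (ENNReal.ofReal Y ^ k * 2 ^ k) := by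
  rw [ENNReal.ofReal_mul (mul_nonneg hX hZ), ENNReal.ofReal_mul hX,
    ENNReal.ofReal_mul (pow_nonneg hY k), ENNReal.ofReal_pow hY,
    ENNReal.ofReal_pow (by norm_num), show ENNReal.ofReal 2 = 2 by simp]


lemma integral_le_of_lintegral {Ω : Type*} [MeasurableSpace Ω] (ν : Measure Ω) (f : Ω → ℕ) (B : ℝ)
    (hB : 0 ≤ B) (h : ∫⁻ ω, (f ω : ENNReal) ∂ν ≤ ENNReal.ofReal B) : ∫ ω, (f ω : ℝ) ∂ν ≤ B := by
  by_cases hm : AEStronglyMeasurable (fun ω => (f ω : ℝ)) ν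
  · rw [integral_eq_lintegral_of_nonneg_ae (Eventually.of_forall fun ω => by positivity) hm]
    simp only [ENNReal.ofReal_natCast]
    exact ENNReal.toReal_le_of_le_ofReal hB h
  · rw [integral_non_aestronglyMeasurable hm]
    exact hB

lemma cond_bound {k d : ℕ} (hd : 1 ≤ d) (τ γ c : ℝ) (hτ : τ ∈ Set.Ioo (2:ℝ) 3) (hγ : 1 < γ)
    (μW : Measure ℝ) [IsProbabilityMeasure μW] (hW : WeightTail τ c μW)
    (H : SimpleGraph (Fin k)) (s : StarKind) (εbar : ℝ) (hεbar : 0 < εbar)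
    (η : ℝ) (hη : 0 < η) (hη2 : η ≤ 1 / 2) :
    ∃ C : ℝ, 0 < C ∧ ∃ m0 : ℝ, 0 ≤ m0 ∧ ∀ (n : ℕ) (_ : 2 ≤ n) (_ : k ≤ n)
      (_ : 2⁻¹ ≤ μW (Set.Iio ((n : ℝ) ^ (1 / (τ - 1)) / εbar))),
    ∫ ω, (starNTotal s H γ (wMean μW) d n ω : ℝ)
          ∂(ProbabilityTheory.cond (girgMeasure μW d n) (cutoffEvent τ εbar d n)) ≤
      C * (n:ℝ) ^ (starOptVal s τ γ d H - k) *
      (n + k * ((4 / εbar) ^ d * n * (1 + Real.log n))) ^ k *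
      ((((n : ℝ) ^ (1 / (τ - 1)) / εbar) ^ η * m0) ^ k * 2 ^ k) := by
  obtain ⟨C, hC, htot⟩ := total_lint hd τ γ c hτ hγ μW hW H s εbar hεbar
  have hmom := moment_finite μW hW (τ - 1 - η) (by linarith [hτ.1]) (by linarith)
  set m0 := (∫⁻ w, ENNReal.ofReal (w ^ (τ - 1 - η)) ∂μW).toReal with hm0
  refine ⟨C, hC, m0, ENNReal.toReal_nonneg, ?_⟩
  intro n hn hkn hq
  have hn0 : (0:ℝ) < n := by positivity
  set M := (n : ℝ) ^ (1 / (τ - 1)) / εbar with hM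
  have hMpos : 0 < M := by positivity
  have hlog := Real.log_natCast_nonneg n
  have hm0nn : 0 ≤ m0 := ENNReal.toReal_nonneg
  set X := C * (n:ℝ) ^ (starOptVal s τ γ d H - k) with hX
  set Z := (n + k * ((4 / εbar) ^ d * n * (1 + Real.log n))) ^ k with hZ
  have hX0 : 0 ≤ X := by positivity
  have hZ0 : 0 ≤ Z := by positivity
  apply integral_le_of_lintegral
  · positivity
  set q := μW (Set.Iio M) with hqd
  set vA := (volume : Measure (Fin n → Torus d)) (Axs εbar d n) with hvA
  -- moment bound
  have hmb : ∫⁻ t in Set.Iio M, ENNReal.ofReal (t ^ (τ - 1)) ∂μW ≤ ENNReal.ofReal (M ^ η * m0) := by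
    rw [ENNReal.ofReal_mul (by positivity), hm0, ENNReal.ofReal_toReal hmom.ne,
      ← lintegral_const_mul _ (by fun_prop)]
    refine le_trans ?_ (setLIntegral_le_lintegral (Set.Iio M) _)
    refine lintegral_mono_ae ?_
    have h1 : ∀ᵐ t ∂(μW.restrict (Set.Iio M)), t ∉ Set.Iio (1:ℝ) :=
      ae_restrict_of_ae (measure_eq_zero_iff_ae_notMem.1 hW.2.1)
    have h2 : ∀ᵐ t ∂(μW.restrict (Set.Iio M)), t ∈ Set.Iio M := ae_restrict_mem measurableSet_Iio
    filter_upwards [h1, h2] with t h1 h2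
    have h1' : 1 ≤ t := not_lt.1 h1
    have h2' : t < M := h2
    have ht : 0 < t := by linarith
    rw [← ENNReal.ofReal_mul (by positivity)]
    apply ENNReal.ofReal_le_ofReal
    calc t ^ (τ - 1) = t ^ η * t ^ (τ - 1 - η) := by rw [← Real.rpow_add ht]; congr 1; ring
      _ ≤ M ^ η * t ^ (τ - 1 - η) := by gcongr
  have hE : girgMeasure μW d n (cutoffEvent τ εbar d n) = q ^ n * vA := by
    rw [cutoff_eq]
    unfold girgMeasure
    rw [Measure.prod_prod, Measure.prod_prod, Measure.pi_pi, Finset.prod_const,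
      Finset.card_univ, Fintype.card_fin]
    have : (Measure.pi fun _ : Sym2 (Fin n) => volume.restrict (Set.Icc (0:ℝ) 1)) Set.univ = 1 :=
      measure_univ
    rw [this, mul_one]
    rfl
  unfold ProbabilityTheory.cond
  rw [lintegral_smul_measure, hE, smul_eq_mul]
  have hqk : q ^ (n - k) ≤ 2 ^ k * q ^ n := by
    have h1 : (1:ENNReal) ≤ 2 * q := by
      calc (1:ENNReal) = 2 * 2⁻¹ := (ENNReal.mul_inv_cancel (by norm_num) (by norm_num)).symm
        _ ≤ 2 * q := by gcongr
    calc q ^ (n - k) = 1 ^ k * q ^ (n - k) := by simp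
      _ ≤ (2 * q) ^ k * q ^ (n - k) := by gcongr
      _ = 2 ^ k * q ^ n := by
        rw [mul_pow, mul_assoc, ← pow_add]; congr 2; omega
  have hfin : q ^ n * vA ≠ ⊤ := by
    rw [← hE]
    unfold girgMeasure
    exact measure_ne_top _ _
  have hmain := htot n hn
  rw [← hM, ← hqd, ← hvA] at hmain
  have h3 : ∫⁻ ω in cutoffEvent τ εbar d n, (starNTotal s H γ (wMean μW) d n ω : ENNReal)
      ∂(girgMeasure μW d n) ≤ ENNReal.ofReal (X * Z * ((M ^ η * m0) ^ k * 2 ^ k)) * (q ^ n * vA) := by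
    refine hmain.trans ?_
    have hsplit : ENNReal.ofReal (X * Z * ((M ^ η * m0) ^ k * 2 ^ k)) =
        ENNReal.ofReal X * ENNReal.ofReal Z * (ENNReal.ofReal (M ^ η * m0) ^ k * 2 ^ k) := by
      exact ofReal_split (by positivity) (by positivity) (by positivity) k
    rw [hsplit]
    calc _ ≤ ENNReal.ofReal X * ENNReal.ofReal Z * (ENNReal.ofReal (M ^ η * m0) ^ k *
          (2 ^ k * q ^ n) * vA) := by gcongr
      _ = _ := by ring
  by_cases hz : q ^ n * vA = 0
  · have h4 : ∫⁻ ω in cutoffEvent τ εbar d n, (starNTotal s H γ (wMean μW) d n ω : ENNReal)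
      ∂(girgMeasure μW d n) = 0 := by
      rw [hz, mul_zero] at h3
      exact le_antisymm h3 zero_le
    rw [h4, mul_zero]
    exact zero_le
  · calc _ ≤ (q ^ n * vA)⁻¹ * (ENNReal.ofReal (X * Z * ((M ^ η * m0) ^ k * 2 ^ k)) * (q ^ n * vA)) := by
          gcongr
      _ = _ := by
        rw [mul_comm, mul_assoc, ENNReal.mul_inv_cancel hz hfin, mul_one]

/-- Theorem `totalsubgraphcounts`, upper bound: conditionally on
the cutoff event, for every `δ > 0`,
`limsup_n E[N^⋆(H) ∣ E_ε̄] / n^{f_H^* + δ} < ∞`. -/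
theorem girg_expected_total_count_upper
    {k d : ℕ} (hd : 1 ≤ d) (τ γ c : ℝ) (hτ : τ ∈ Set.Ioo (2:ℝ) 3) (hγ : 1 < γ)
    (μW : Measure ℝ) [IsProbabilityMeasure μW] (hW : WeightTail τ c μW)
    (H : SimpleGraph (Fin k)) (s : StarKind)
    (εbar : ℝ) (hεbar : 0 < εbar) (δ : ℝ) (hδ : 0 < δ) :
    IsBoundedUnder (· ≤ ·) atTop (fun n : ℕ =>
      (∫ ω, (starNTotal s H γ (wMean μW) d n ω : ℝ)
          ∂(ProbabilityTheory.cond (girgMeasure μW d n) (cutoffEvent τ εbar d n))) /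
        (n : ℝ) ^ (starOptVal s τ γ d H + δ)) := by
  set η : ℝ := min (δ / (2 * (k + 1))) (1 / 2) with hηd
  have hη : 0 < η := lt_min (by positivity) (by norm_num)
  have hη2 : η ≤ 1 / 2 := min_le_right _ _
  have hηδ : 2 * k * η ≤ δ := by
    have h1 : η ≤ δ / (2 * (k + 1)) := min_le_left _ _
    rw [le_div_iff₀ (by positivity)] at h1
    nlinarith
  obtain ⟨C, hC, m0, hm0, hb⟩ := cond_bound hd τ γ c hτ hγ μW hW H s εbar hεbar η hη hη2
  set f := starOptVal s τ γ d H with hf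
  set B := C * ((1 + k * (4 / εbar) ^ d) * (1 + 1 / η)) ^ k * (((1 / εbar) ^ η * m0) ^ k * 2 ^ k) with hB
  refine ⟨B, ?_⟩
  rw [eventually_map]
  have hτ1 : 0 < 1 / (τ - 1) := by apply one_div_pos.2; linarith [hτ.1]
  have hτ2 : 1 / (τ - 1) ≤ 1 := by
    rw [div_le_one (by linarith [hτ.1])]; linarith [hτ.1]
  have hMt : Tendsto (fun n : ℕ => (n : ℝ) ^ (1 / (τ - 1)) / εbar) atTop atTop :=
    ((tendsto_rpow_atTop hτ1).comp tendsto_natCast_atTop_atTop).atTop_div_const hεbar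
  have hqt : ∀ᶠ n : ℕ in atTop, 2⁻¹ ≤ μW (Set.Iio ((n : ℝ) ^ (1 / (τ - 1)) / εbar)) := by
    have h1 : Tendsto (fun n : ℕ => μW (Set.Iic ((n : ℝ) ^ (1 / (τ - 1)) / εbar - 1))) atTop
        (nhds (μW Set.univ)) :=
      (tendsto_measure_Iic_atTop μW).comp (tendsto_atTop_add_const_right _ (-1) hMt)
    rw [measure_univ] at h1
    filter_upwards [h1.eventually (eventually_ge_nhds (show (2⁻¹ : ENNReal) < 1 by simp))] with n h
    refine h.trans (measure_mono fun t ht => ?_)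
    have ht' : t ≤ (n : ℝ) ^ (1 / (τ - 1)) / εbar - 1 := ht
    have : t < (n : ℝ) ^ (1 / (τ - 1)) / εbar := by linarith
    exact this
  filter_upwards [hqt, eventually_ge_atTop 2, eventually_ge_atTop k] with n hq hn hk
  have hn1 : (1:ℝ) ≤ n := by exact_mod_cast (by omega : 1 ≤ n)
  have hn0 : (0:ℝ) < n := by linarith
  rw [div_le_iff₀ (by positivity)]
  refine (hb n hn hk hq).trans ?_
  have hlog0 := Real.log_natCast_nonneg n
  have hnη : 1 ≤ (n:ℝ) ^ η := Real.one_le_rpow hn1 hη.le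
  have hlog : 1 + Real.log n ≤ (1 + 1 / η) * (n:ℝ) ^ η := by
    have := Real.log_le_rpow_div hn0.le hη
    have h2 : (n:ℝ) ^ η / η = 1 / η * (n:ℝ) ^ η := by ring
    linarith
  have e1 : (n:ℝ) + k * ((4 / εbar) ^ d * n * (1 + Real.log n)) ≤
      ((1 + k * (4 / εbar) ^ d) * (1 + 1 / η)) * (n:ℝ) ^ (1 + η) := by
    rw [Real.rpow_add hn0, Real.rpow_one]
    calc (n:ℝ) + k * ((4 / εbar) ^ d * n * (1 + Real.log n))
        ≤ n * (1 + Real.log n) + k * ((4 / εbar) ^ d * n * (1 + Real.log n)) := by nlinarith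
      _ = (1 + k * (4 / εbar) ^ d) * n * (1 + Real.log n) := by ring
      _ ≤ (1 + k * (4 / εbar) ^ d) * n * ((1 + 1 / η) * (n:ℝ) ^ η) := by gcongr
      _ = _ := by ring
  have e2 : ((n : ℝ) ^ (1 / (τ - 1)) / εbar) ^ η ≤ (1 / εbar) ^ η * (n:ℝ) ^ η := by
    rw [← Real.mul_rpow (by positivity) hn0.le]
    apply Real.rpow_le_rpow (by positivity) _ hη.le
    rw [div_eq_mul_one_div, mul_comm]
    gcongr
    calc (n:ℝ) ^ (1 / (τ - 1)) ≤ (n:ℝ) ^ (1:ℝ) := Real.rpow_le_rpow_of_exponent_le hn1 hτ2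
      _ = n := Real.rpow_one _
  calc _ ≤ C * (n:ℝ) ^ (f - k) *
      (((1 + k * (4 / εbar) ^ d) * (1 + 1 / η)) * (n:ℝ) ^ (1 + η)) ^ k *
      (((1 / εbar) ^ η * (n:ℝ) ^ η * m0) ^ k * 2 ^ k) := by
        gcongr
    _ = B * ((n:ℝ) ^ (f - k) * ((n:ℝ) ^ (1 + η)) ^ k * ((n:ℝ) ^ η) ^ k) := by
        rw [hB]; simp only [mul_pow]; ring
    _ = B * (n:ℝ) ^ (f + 2 * k * η) := by
        rw [← Real.rpow_natCast ((n:ℝ) ^ (1 + η)), ← Real.rpow_natCast ((n:ℝ) ^ η),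
          ← Real.rpow_mul hn0.le, ← Real.rpow_mul hn0.le, ← Real.rpow_add hn0, ← Real.rpow_add hn0]
        congr 2; ring
    _ ≤ B * (n:ℝ) ^ (f + δ) := by
        have hB0 : 0 ≤ B := by positivity
        gcongr

end
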